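/- Let u be a pair potential that is stable with constant B ≥ 0 and regular. Then for every bounded measurable Λ ⊂ ℝ^d and every real z with 0 < z < z₀, the partition function at negative activity is strictly positive: Ξ_Λ(−z) = 1 + Σ_{k≥1} ((−z)^k/k!) ∫_{Λ^k} e^{−βH(y_1,…,y_k)} dy_1⋯dy_k > 0. (This is the second Lenard-positivity condition for the Kirkwood closure correlation functions ρ^{(n)}(x_1,…,x_n) = z^n Π_{1≤i<j≤n} e^{−βu(x_i−x_j)}.) -/

import Mathlib

open MeasureTheory Bornology

noncomputable section

/-- Boltzmann factor `e^{-β t}` with the convention `e^{-β(+∞)} = 0`. -/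
def boltz (β : ℝ) (t : EReal) : ℝ :=
  if t = ⊤ then 0 else Real.exp (-β * t.toReal)

/-- Hamiltonian of a pair potential: `H(x₁,…,xₙ) = ∑_{i<j} u(xᵢ - xⱼ)`. -/
def Ham {d : ℕ} (u : (Fin d → ℝ) → EReal) (n : ℕ) (x : Fin n → (Fin d → ℝ)) : EReal :=
  ∑ p ∈ Finset.univ.filter (fun p : Fin n × Fin n => p.1 < p.2), u (x p.1 - x p.2)

/-- A pair potential: even, measurable, bounded from below. -/
def IsPairPotential {d : ℕ} (u : (Fin d → ℝ) → EReal) : Prop :=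
  Measurable u ∧ (∀ x, u (-x) = u x) ∧ ∃ m : ℝ, ∀ x, (m : EReal) ≤ u x

/-- Stability with constant `B`: `H(x₁,…,xₙ) ≥ -Bn`. -/
def IsStable {d : ℕ} (u : (Fin d → ℝ) → EReal) (B : ℝ) : Prop :=
  ∀ (n : ℕ) (x : Fin n → (Fin d → ℝ)), ((-(B * n) : ℝ) : EReal) ≤ Ham u n x

/-- Mayer function `f_β = e^{-βu} - 1`. -/
def mayer {d : ℕ} (β : ℝ) (u : (Fin d → ℝ) → EReal) (x : Fin d → ℝ) : ℝ :=
  boltz β (u x) - 1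

/-- Regularity: the Mayer function is integrable. -/
def IsRegularPP {d : ℕ} (β : ℝ) (u : (Fin d → ℝ) → EReal) : Prop :=
  Integrable (mayer β u)

/-- `C_β(u) = ∫ |e^{-βu} - 1|`. -/
def Creg {d : ℕ} (β : ℝ) (u : (Fin d → ℝ) → EReal) : ℝ :=
  ∫ x, |mayer β u x|

/-- The cartesian power `Λ^k`. -/
def cube {d : ℕ} (Λ : Set (Fin d → ℝ)) (k : ℕ) : Set (Fin k → (Fin d → ℝ)) :=
  Set.univ.pi fun _ => Λ

/-- Grand canonical partition function `Ξ_Λ(z)`. -/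
def Xi {d : ℕ} (β : ℝ) (u : (Fin d → ℝ) → EReal) (Λ : Set (Fin d → ℝ)) (z : ℂ) : ℂ :=
  ∑' k : ℕ, z ^ k / (Nat.factorial k : ℂ) *
    ((∫ y in cube Λ k, boltz β (Ham u k y) : ℝ) : ℂ)

/-- `θ_Λ^{(n)}(z; x₁,…,xₙ)`. -/
def theta {d : ℕ} (β : ℝ) (u : (Fin d → ℝ) → EReal) (Λ : Set (Fin d → ℝ)) (n : ℕ)
    (z : ℂ) (x : Fin n → (Fin d → ℝ)) : ℂ :=
  (Xi β u Λ z)⁻¹ * ∑' k : ℕ, z ^ (n + k) / (Nat.factorial k : ℂ) *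
    ((∫ y in cube Λ k, boltz β (Ham u (n + k) (Fin.append x y)) : ℝ) : ℂ)

end

/-!
Write the Boltzmann factors of finite configurations as a bounded function
`w(s) = c ^ |s| * ∏ e^{-βu}`, and let `T` integrate out one point of `Λ`. Then `G = exp (tT) w`
satisfies `G(∅) = Ξ_Λ(tc)`. Removing a point `a` from `a, s` multiplies `w` by
`c * ∏_{x ∈ s} e^{-βu(a - x)}` and turns `T` into the operator `A` with density `e^{-βu(a - ·)}`.
As `A` and `T` commute, this is the Kirkwood–Salsburg equation
`G(a, s) = c * ∏_{x ∈ s} e^{-βu(a - x)} * (exp (t (A - T)) G)(s)`, in which `‖A - T‖ ≤ C_β(u)`.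
By stability every nonempty configuration has a point `a` for which the product is at most
`e^{2βB}`. Hence `G(∅) = 0` would give `‖G‖ ≤ q ‖G‖` with `q < 1`, so `G = 0`, although `exp (tT)`
is injective and `w ≠ 0`. So `Ξ_Λ` has no real zero of absolute value less than `z₀`; being
continuous with `Ξ_Λ(0) = 1`, it is positive there.
-/

open scoped ENNReal

noncomputable section

section Exponential

theorem norm_exp_le_exp_norm {𝔸 : Type*} [NormedRing 𝔸] [NormedAlgebra ℝ 𝔸] [CompleteSpace 𝔸]
    (h1 : ‖(1 : 𝔸)‖ ≤ 1) (x : 𝔸) : ‖NormedSpace.exp x‖ ≤ Real.exp ‖x‖ := by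
  have norm_pow_le_pow_norm (k : ℕ) : ‖x ^ k‖ ≤ ‖x‖ ^ k := by
    rcases k.eq_zero_or_pos with rfl | hk
    · simpa using h1
    · exact norm_pow_le' x hk
  have hasSum_norm : HasSum (fun k : ℕ ↦ ‖x‖ ^ k / k.factorial) (Real.exp ‖x‖) := by
    rw [Real.exp_eq_exp_ℝ]
    exact NormedSpace.expSeries_div_hasSum_exp ‖x‖
  rw [← (NormedSpace.exp_series_hasSum_exp' (𝕂 := ℝ) x).tsum_eq]
  refine tsum_of_norm_bounded hasSum_norm fun k ↦ ?_
  rw [norm_smul, norm_inv, Real.norm_natCast, div_eq_inv_mul]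
  gcongr
  exact norm_pow_le_pow_norm k

variable {X : Type*} [NormedAddCommGroup X] [NormedSpace ℝ X] [CompleteSpace X]

theorem hasSum_exp_smul_apply (A : X →L[ℝ] X) (t : ℝ) (g : X) :
    HasSum (fun k : ℕ ↦ (t ^ k / k.factorial) • (A ^ k) g) (NormedSpace.exp (t • A) g) := by
  have hseries := (ContinuousLinearMap.apply ℝ X g).hasSum
    (NormedSpace.exp_series_hasSum_exp' (𝕂 := ℝ) (t • A))
  simpa only [smul_pow, smul_smul, map_smul, ContinuousLinearMap.apply_apply, div_eq_inv_mul]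
    using hseries

theorem exp_sub_apply_exp_apply {A T : X →L[ℝ] X} (h : Commute A T) (g : X) :
    NormedSpace.exp (A - T) (NormedSpace.exp T g) = NormedSpace.exp A g := by
  let : NormedAlgebra ℚ (X →L[ℝ] X) := NormedAlgebra.restrictScalars ℚ ℝ _
  have hmul := NormedSpace.exp_add_of_commute (h.sub_left (Commute.refl T))
  rw [sub_add_cancel] at hmul
  rw [hmul, mul_apply_eq_comp]

theorem exp_apply_injective (A : X →L[ℝ] X) : Function.Injective ⇑(NormedSpace.exp A) := by
  refine Function.LeftInverse.injective (g := ⇑(NormedSpace.exp (-A))) fun g ↦ ?_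
  simpa [NormedSpace.exp_zero] using exp_sub_apply_exp_apply (Commute.zero_left A) g

theorem continuous_exp_smul_apply (A : X →L[ℝ] X) (g : X) :
    Continuous fun t : ℝ ↦ NormedSpace.exp (t • A) g := by
  let : NormedAlgebra ℚ (X →L[ℝ] X) := NormedAlgebra.restrictScalars ℚ ℝ _
  have hexp : Continuous fun t : ℝ ↦ NormedSpace.exp (t • A) :=
    NormedSpace.exp_continuous.comp (continuous_id.smul continuous_const)
  exact hexp.clm_apply continuous_const

end Exponential

section BoundedMeasurable

/-- The subspace of measurable functions in `ℓ^∞(α)`. -/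
def measurableSubmodule (α : Type*) [MeasurableSpace α] :
    Submodule ℝ (lp (fun _ : α ↦ ℝ) ∞) where
  carrier := {g | Measurable g}
  add_mem' hg hh := hg.add hh
  zero_mem' := measurable_const
  smul_mem' c _ hg := hg.const_mul c

/-- The Banach space of bounded measurable real functions with the supremum norm. The functions are
defined pointwise and not up to null sets, since they are evaluated at single points below. -/
def BoundedMeasurable (α : Type*) [MeasurableSpace α] : Type _ := measurableSubmodule α

namespace BoundedMeasurable

variable {α : Type*} [MeasurableSpace α]

instance : NormedAddCommGroup (BoundedMeasurable α) :=
  inferInstanceAs (NormedAddCommGroup (measurableSubmodule α))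

instance : NormedSpace ℝ (BoundedMeasurable α) :=
  inferInstanceAs (NormedSpace ℝ (measurableSubmodule α))

instance : FunLike (BoundedMeasurable α) α ℝ where
  coe g := g.1
  coe_injective _ _ h := Subtype.ext (lp.ext h)

instance : CompleteSpace (BoundedMeasurable α) := by
  refine (IsSeqClosed.isClosed fun f g hf hfg ↦ ?_).isComplete.completeSpace_coe
  refine measurable_of_tendsto_metrizable hf (tendsto_pi_nhds.2 fun s ↦ ?_)
  exact ((lp.evalCLM (𝕜 := ℝ) (fun _ : α ↦ ℝ) ∞ s).continuous.tendsto g).comp hfg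

@[ext] theorem ext {g h : BoundedMeasurable α} (hgh : ∀ s, g s = h s) : g = h :=
  DFunLike.ext g h hgh

theorem measurable (g : BoundedMeasurable α) : Measurable g := g.2

theorem abs_apply_le_norm (g : BoundedMeasurable α) (s : α) : |g s| ≤ ‖g‖ :=
  lp.norm_apply_le_norm ENNReal.top_ne_zero g.1 s

theorem norm_le {g : BoundedMeasurable α} {C : ℝ} (hC : 0 ≤ C) (h : ∀ s, |g s| ≤ C) : ‖g‖ ≤ C :=
  lp.norm_le_of_forall_le hC h

/-- Evaluation at a point, as a bounded functional. -/
def evalCLM (s : α) : BoundedMeasurable α →L[ℝ] ℝ :=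
  (lp.evalCLM (𝕜 := ℝ) (fun _ : α ↦ ℝ) ∞ s).comp (measurableSubmodule α).subtypeL

@[simp] theorem evalCLM_apply (s : α) (g : BoundedMeasurable α) : evalCLM s g = g s := rfl

@[simp] theorem zero_apply (s : α) : (0 : BoundedMeasurable α) s = 0 := rfl

@[simp] theorem add_apply (g h : BoundedMeasurable α) (s : α) : (g + h) s = g s + h s := rfl

@[simp] theorem sub_apply (g h : BoundedMeasurable α) (s : α) : (g - h) s = g s - h s := rfl

@[simp] theorem smul_apply (c : ℝ) (g : BoundedMeasurable α) (s : α) : (c • g) s = c * g s := rfl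

/-- The element of `BoundedMeasurable α` given by a measurable function with an explicit bound. -/
def ofBound (f : α → ℝ) (hf : Measurable f) (C : ℝ) (hC : ∀ s, |f s| ≤ C) : BoundedMeasurable α :=
  ⟨⟨f, memℓp_infty ⟨C, by rintro _ ⟨s, rfl⟩; exact hC s⟩⟩, hf⟩

@[simp] theorem ofBound_apply (f : α → ℝ) (hf : Measurable f) (C : ℝ) (hC : ∀ s, |f s| ≤ C)
    (s : α) : ofBound f hf C hC s = f s := rfl

end BoundedMeasurable

end BoundedMeasurable

section Configuration

variable {E : Type*}

/-- The finite configuration of points listed by a tuple, i.e. the tuple up to reordering. -/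
def config {n : ℕ} (x : Fin n → E) : Multiset E := List.ofFn x

theorem config_fin_zero (x : Fin 0 → E) : config x = 0 := by simp [config]

theorem config_cons {n : ℕ} (a : E) (x : Fin n → E) :
    config (Fin.cons a x : Fin (n + 1) → E) = a ::ₘ config x := by
  simp [config, List.ofFn_succ]

theorem card_config {n : ℕ} (x : Fin n → E) : (config x).card = n := by simp [config]

theorem exists_config_eq (s : Multiset E) : ∃ (n : ℕ) (x : Fin n → E), config x = s := by
  induction s using Quotient.inductionOn with
  | _ l => exact ⟨l.length, l.get, by simp [config]⟩

variable [MeasurableSpace E]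

/-- The σ-algebra for which a function of a finite configuration is measurable when it is a
measurable function of the points in every number, see `measurable_multiset_iff`. -/
instance measurableSpaceMultiset : MeasurableSpace (Multiset E) :=
  ⨅ n : ℕ, MeasurableSpace.map (config (n := n)) MeasurableSpace.pi

theorem measurable_multiset_iff {β : Type*} [MeasurableSpace β] {f : Multiset E → β} :
    Measurable f ↔ ∀ n, Measurable fun x : Fin n → E ↦ f (config x) := by
  simp only [measurable_iff_comap_le, measurableSpaceMultiset, le_iInf_iff,
    ← MeasurableSpace.comap_le_iff_le_map, MeasurableSpace.comap_comp, Function.comp_def]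

theorem measurable_config (n : ℕ) : Measurable (config : (Fin n → E) → Multiset E) :=
  measurable_multiset_iff.1 measurable_id n

theorem measurable_fin_cons (n : ℕ) :
    Measurable fun p : E × (Fin n → E) ↦ (Fin.cons p.1 p.2 : Fin (n + 1) → E) := by
  refine measurable_pi_iff.2 fun i ↦ Fin.cases ?_ (fun j ↦ ?_) i
  · simpa only [Fin.cons_zero] using measurable_fst
  · simpa only [Fin.cons_succ, Function.comp_def] using (measurable_pi_apply j).comp measurable_snd

theorem measurable_cons_config (n : ℕ) :
    Measurable fun p : E × (Fin n → E) ↦ p.1 ::ₘ config p.2 := by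
  simpa only [Function.comp_def, config_cons] using
    (measurable_config (n + 1)).comp (measurable_fin_cons n)

theorem measurable_cons_const (s : Multiset E) : Measurable fun y : E ↦ y ::ₘ s := by
  obtain ⟨n, x, rfl⟩ := exists_config_eq s
  exact (measurable_cons_config n).comp (measurable_id.prodMk measurable_const)

theorem measurable_cons_cons_const (s : Multiset E) :
    Measurable fun p : E × E ↦ p.1 ::ₘ p.2 ::ₘ s := by
  obtain ⟨n, x, rfl⟩ := exists_config_eq s
  simpa only [Function.comp_def, config_cons] using (measurable_cons_config (n + 1)).comp
    (measurable_fst.prodMk ((measurable_fin_cons n).comp (measurable_snd.prodMk measurable_const)))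

end Configuration

theorem integral_pi_fin_succ {E : Type*} [MeasurableSpace E] {μ : Measure E} [SigmaFinite μ]
    {n : ℕ} {f : (Fin (n + 1) → E) → ℝ} (hf : Integrable f (Measure.pi fun _ ↦ μ)) :
    ∫ x, f x ∂(Measure.pi fun _ ↦ μ) =
      ∫ y : Fin n → E, ∫ a, f (Fin.cons a y) ∂μ ∂(Measure.pi fun _ ↦ μ) := by
  have hmp := (measurePreserving_piFinSuccAbove (fun _ : Fin (n + 1) ↦ μ) 0).symm
  have symm_apply (a : E) (y : Fin n → E) :
      (MeasurableEquiv.piFinSuccAbove (fun _ ↦ E) (0 : Fin (n + 1))).symm (a, y) =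
        (Fin.cons a y : Fin (n + 1) → E) := by
    simp [MeasurableEquiv.piFinSuccAbove_symm_apply, Fin.insertNthEquiv]
  have hint := (hmp.integrable_comp_emb (MeasurableEquiv.measurableEmbedding _)).2 hf
  calc ∫ x, f x ∂(Measure.pi fun _ ↦ μ) = _ := (hmp.integral_comp' f).symm
    _ = _ := integral_prod_symm _ hint
    _ = _ := by simp only [symm_apply]

section AnnihilationOperator

variable {E : Type*} [MeasurableSpace E] (μ : Measure E) {φ ψ : E → ℝ}

variable {μ} in
theorem integrable_mul_apply_cons (hφ : Integrable φ μ) (g : BoundedMeasurable (Multiset E))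
    (s : Multiset E) : Integrable (fun y ↦ φ y * g (y ::ₘ s)) μ :=
  hφ.mul_bdd (c := ‖g‖) (g.measurable.comp (measurable_cons_const s)).aestronglyMeasurable
    (.of_forall fun _ ↦ g.abs_apply_le_norm _)

variable {μ} in
theorem abs_integral_mul_apply_cons_le (hφ : Integrable φ μ) (g : BoundedMeasurable (Multiset E))
    (s : Multiset E) : |∫ y, φ y * g (y ::ₘ s) ∂μ| ≤ (∫ y, |φ y| ∂μ) * ‖g‖ :=
  calc |∫ y, φ y * g (y ::ₘ s) ∂μ| ≤ ∫ y, |φ y * g (y ::ₘ s)| ∂μ := abs_integral_le_integral_abs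
    _ ≤ ∫ y, |φ y| * ‖g‖ ∂μ := by
      refine integral_mono (integrable_mul_apply_cons hφ g s).abs (hφ.abs.mul_const _) fun y ↦ ?_
      simp only [abs_mul]
      gcongr
      exact g.abs_apply_le_norm _
    _ = (∫ y, |φ y| ∂μ) * ‖g‖ := integral_mul_const _ _

theorem measurable_integral_mul_apply_cons [SFinite μ] (hφm : Measurable φ)
    (g : BoundedMeasurable (Multiset E)) :
    Measurable fun s : Multiset E ↦ ∫ y, φ y * g (y ::ₘ s) ∂μ := by
  refine measurable_multiset_iff.2 fun n ↦ ?_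
  have hjoint : Measurable fun p : E × (Fin n → E) ↦ φ p.1 * g (p.1 ::ₘ config p.2) :=
    (hφm.comp measurable_fst).mul (g.measurable.comp (measurable_cons_config n))
  exact hjoint.stronglyMeasurable.integral_prod_left'.measurable

variable [SFinite μ]

/-- The annihilation operator `(a(φ) g)(s) = ∫ φ(y) g(y, s) dμ(y)` on bounded functions of finite
configurations. -/
def annihilationOp (hφm : Measurable φ) (hφ : Integrable φ μ) :
    BoundedMeasurable (Multiset E) →L[ℝ] BoundedMeasurable (Multiset E) :=
  LinearMap.mkContinuous
    { toFun g := .ofBound (fun s ↦ ∫ y, φ y * g (y ::ₘ s) ∂μ)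
        (measurable_integral_mul_apply_cons μ hφm g) ((∫ y, |φ y| ∂μ) * ‖g‖)
        (abs_integral_mul_apply_cons_le hφ g)
      map_add' g h := by
        ext s
        simp only [BoundedMeasurable.ofBound_apply, BoundedMeasurable.add_apply, mul_add]
        exact integral_add (integrable_mul_apply_cons hφ g s) (integrable_mul_apply_cons hφ h s)
      map_smul' c g := by
        ext s
        simp only [BoundedMeasurable.ofBound_apply, BoundedMeasurable.smul_apply, RingHom.id_apply,
          mul_left_comm _ c, integral_const_mul] }
    (∫ y, |φ y| ∂μ) fun g ↦ BoundedMeasurable.norm_le (by positivity)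
      (abs_integral_mul_apply_cons_le hφ g)

variable (hφm : Measurable φ) (hφ : Integrable φ μ) (hψm : Measurable ψ) (hψ : Integrable ψ μ)

theorem annihilationOp_apply (g : BoundedMeasurable (Multiset E)) (s : Multiset E) :
    annihilationOp μ hφm hφ g s = ∫ y, φ y * g (y ::ₘ s) ∂μ := rfl

theorem norm_annihilationOp_sub_le :
    ‖annihilationOp μ hφm hφ - annihilationOp μ hψm hψ‖ ≤ ∫ y, |φ y - ψ y| ∂μ := by
  refine ContinuousLinearMap.opNorm_le_bound _ (by positivity) fun g ↦
    BoundedMeasurable.norm_le (by positivity) fun s ↦ ?_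
  have hdiff : (annihilationOp μ hφm hφ - annihilationOp μ hψm hψ) g s =
      ∫ y, (φ y - ψ y) * g (y ::ₘ s) ∂μ := by
    simp only [sub_apply, BoundedMeasurable.sub_apply, annihilationOp_apply, sub_mul]
    exact (integral_sub (integrable_mul_apply_cons hφ g s) (integrable_mul_apply_cons hψ g s)).symm
  rw [hdiff]
  exact abs_integral_mul_apply_cons_le (hφ.sub hψ) g s

theorem commute_annihilationOp :
    Commute (annihilationOp μ hφm hφ) (annihilationOp μ hψm hψ) := by
  ext g s
  have hint : Integrable (Function.uncurry fun y y' ↦ φ y * (ψ y' * g (y' ::ₘ y ::ₘ s)))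
      (μ.prod μ) := by
    have hbdd := (hφ.mul_prod hψ).mul_bdd (c := ‖g‖)
      ((g.measurable.comp (measurable_cons_cons_const s)).comp measurable_swap).aestronglyMeasurable
      (.of_forall fun _ ↦ g.abs_apply_le_norm _)
    simpa only [Function.uncurry_def, Function.comp_def, Prod.swap, mul_assoc] using hbdd
  simp only [mul_apply_eq_comp, annihilationOp_apply, ← integral_const_mul]
  rw [integral_integral_swap hint]
  simp only [Multiset.cons_swap, mul_left_comm]

end AnnihilationOperator

section AddPointOperator

variable {E : Type*} [MeasurableSpace E] (μ : Measure E) [IsFiniteMeasure μ]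

/-- The operator `(T g)(s) = ∫ g(y, s) dμ(y)`, for which `exp (t • T)` sums over all the finite
configurations of additional points with activity `t`. -/
def addPointOp : BoundedMeasurable (Multiset E) →L[ℝ] BoundedMeasurable (Multiset E) :=
  annihilationOp μ measurable_const (integrable_const 1)

theorem addPointOp_apply (g : BoundedMeasurable (Multiset E)) (s : Multiset E) :
    addPointOp μ g s = ∫ y, g (y ::ₘ s) ∂μ := by
  simp only [addPointOp, annihilationOp_apply, one_mul]

theorem addPointOp_pow_apply_zero (g : BoundedMeasurable (Multiset E)) (k : ℕ) :
    (addPointOp μ ^ k) g 0 = ∫ y : Fin k → E, g (config y) ∂(Measure.pi fun _ ↦ μ) := by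
  induction k generalizing g with
  | zero => simp [config_fin_zero, Measure.real]
  | succ k ih =>
    have hint : Integrable (fun y : Fin (k + 1) → E ↦ g (config y)) (Measure.pi fun _ ↦ μ) :=
      .of_bound (g.measurable.comp (measurable_config _)).aestronglyMeasurable ‖g‖
        (.of_forall fun _ ↦ g.abs_apply_le_norm _)
    simp only [pow_succ, mul_apply_eq_comp, ih, integral_pi_fin_succ hint, config_cons,
      addPointOp_apply]

theorem exp_smul_addPointOp_apply_zero (g : BoundedMeasurable (Multiset E)) (t : ℝ) :
    NormedSpace.exp (t • addPointOp μ) g 0 = ∑' k : ℕ, t ^ k / k.factorial *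
      ∫ y : Fin k → E, g (config y) ∂(Measure.pi fun _ ↦ μ) := by
  have hseries := (BoundedMeasurable.evalCLM 0).hasSum (hasSum_exp_smul_apply (addPointOp μ) t g)
  simpa only [map_smul, BoundedMeasurable.evalCLM_apply, smul_eq_mul, addPointOp_pow_apply_zero]
    using hseries.tsum_eq.symm

end AddPointOperator

section PairWeight

theorem prod_prod_erase_eq_sq_prod_lt {ι M : Type*} [Fintype ι] [LinearOrder ι] [CommMonoid M]
    {f : ι → ι → M} (hf : ∀ i j, f i j = f j i) :
    ∏ i, ∏ j ∈ Finset.univ.erase i, f i j = (∏ p : ι × ι with p.1 < p.2, f p.1 p.2) ^ 2 := by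
  have split_erase (i : ι) : ∏ j ∈ Finset.univ.erase i, f i j =
      (∏ j, if i < j then f i j else 1) * ∏ j, if j < i then f j i else 1 := by
    rw [← Finset.prod_mul_distrib, ← Finset.mul_prod_erase Finset.univ _ (Finset.mem_univ i)]
    simp only [lt_irrefl, if_false, one_mul]
    refine Finset.prod_congr rfl fun j hj ↦ ?_
    rcases lt_or_gt_of_ne (Finset.ne_of_mem_erase hj) with h | h
    · simp [h, h.not_gt, hf i]
    · simp [h, h.not_gt]
  simp only [split_erase, Finset.prod_mul_distrib, Finset.prod_filter, Fintype.prod_prod_type, sq]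
  congr 1
  exact Finset.prod_comm

variable {E : Type*} (e : E → E → ℝ)

/-- The product of a pair weight `e` over the pairs of points of a tuple, which is the Boltzmann
factor `e^{-βH}` when `e a b = e^{-βu(a-b)}`. -/
def pairProd {n : ℕ} (x : Fin n → E) : ℝ :=
  ∏ p : Fin n × Fin n with p.1 < p.2, e (x p.1) (x p.2)

/-- The product `pairProd` of a symmetric pair weight as a function of the configuration. -/
def pairWeight (hsymm : ∀ a b, e a b = e b a) (s : Multiset E) : ℝ :=
  s.recOn 1 (fun a s weight ↦ (s.map (e a)).prod * weight) fun a b s weight ↦ heq_of_eq (by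
    simp only [Multiset.map_cons, Multiset.prod_cons, hsymm a b]; ring)

variable {e}

theorem pairProd_fin_cons {n : ℕ} (a : E) (x : Fin n → E) :
    pairProd e (Fin.cons a x : Fin (n + 1) → E) = (∏ i, e a (x i)) * pairProd e x := by
  simp [pairProd, Finset.prod_filter, Fintype.prod_prod_type, Fin.prod_univ_succ]

section Symmetric

variable (hsymm : ∀ a b, e a b = e b a)

theorem pairWeight_zero : pairWeight e hsymm 0 = 1 := Multiset.recOn_0

theorem pairWeight_cons (a : E) (s : Multiset E) :
    pairWeight e hsymm (a ::ₘ s) = (s.map (e a)).prod * pairWeight e hsymm s :=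
  Multiset.recOn_cons a s

theorem pairWeight_config {n : ℕ} (x : Fin n → E) :
    pairWeight e hsymm (config x) = pairProd e x := by
  induction n with
  | zero => simp [config_fin_zero, pairWeight_zero, pairProd]
  | succ n ih =>
    rw [← Fin.cons_self_tail x, config_cons, pairWeight_cons, ih, pairProd_fin_cons]
    simp [config, List.map_ofFn, List.prod_ofFn]

end Symmetric

theorem pairProd_nonneg (hnonneg : ∀ a b, 0 ≤ e a b) {n : ℕ} (x : Fin n → E) : 0 ≤ pairProd e x :=
  Finset.prod_nonneg fun _ _ ↦ hnonneg _ _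

theorem measurable_pairProd [MeasurableSpace E] (hmeas : Measurable (Function.uncurry e)) (n : ℕ) :
    Measurable fun x : Fin n → E ↦ pairProd e x := by
  refine Finset.measurable_fun_prod _ fun p _ ↦ ?_
  have hpair : Measurable fun x : Fin n → E ↦ (x p.1, x p.2) :=
    (measurable_pi_apply p.1).prodMk (measurable_pi_apply p.2)
  exact hmeas.comp hpair

variable {b : ℝ}

theorem apply_le_sq_of_pairProd_le (hstab : ∀ (n : ℕ) (x : Fin n → E), pairProd e x ≤ b ^ n)
    (a c : E) : e a c ≤ b ^ 2 := by
  simpa [pairProd, Finset.prod_filter, Fintype.prod_prod_type] using hstab 2 ![a, c]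

theorem exists_prod_erase_le_sq (hsymm : ∀ a b, e a b = e b a) (hnonneg : ∀ a b, 0 ≤ e a b)
    (hb : 0 < b) {n : ℕ} [NeZero n] {x : Fin n → E} (hx : pairProd e x ≤ b ^ n) :
    ∃ i, ∏ j ∈ Finset.univ.erase i, e (x i) (x j) ≤ b ^ 2 := by
  by_contra! hlt
  have := calc pairProd e x ^ 2 ≤ (b ^ n) ^ 2 :=
        pow_le_pow_left₀ (pairProd_nonneg hnonneg x) hx 2
    _ = ∏ _i : Fin n, b ^ 2 := by simp [pow_right_comm]
    _ < ∏ i, ∏ j ∈ Finset.univ.erase i, e (x i) (x j) :=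
        Finset.prod_lt_prod_of_nonempty (fun _ _ ↦ by positivity) (fun i _ ↦ hlt i)
          Finset.univ_nonempty
    _ = pairProd e x ^ 2 := prod_prod_erase_eq_sq_prod_lt fun i j ↦ hsymm (x i) (x j)
  exact this.false

theorem config_eq_cons_map_erase {n : ℕ} (x : Fin n → E) (i : Fin n) :
    config x = x i ::ₘ (Finset.univ.erase i).val.map x := by
  rw [config, ← Fin.univ_val_map, ← Multiset.map_cons,
    ← Finset.insert_val_of_notMem (Finset.notMem_erase i _),
    Finset.insert_erase (Finset.mem_univ i)]

theorem exists_eq_cons_prod_map_le_sq (hsymm : ∀ a b, e a b = e b a) (hnonneg : ∀ a b, 0 ≤ e a b)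
    (hb : 0 < b) (hstab : ∀ (n : ℕ) (x : Fin n → E), pairProd e x ≤ b ^ n)
    {s : Multiset E} (hs : s ≠ 0) :
    ∃ a s', s = a ::ₘ s' ∧ |(s'.map (e a)).prod| ≤ b ^ 2 := by
  obtain ⟨n, x, rfl⟩ := exists_config_eq s
  have : NeZero n := ⟨by rintro rfl; exact hs (config_fin_zero x)⟩
  obtain ⟨i, hi⟩ := exists_prod_erase_le_sq hsymm hnonneg hb (hstab n x)
  refine ⟨x i, _, config_eq_cons_map_erase x i, ?_⟩
  rw [Multiset.map_map, abs_of_nonneg (Multiset.prod_nonneg (by simp [hnonneg]))]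
  exact hi

end PairWeight

section KirkwoodSalsburg

variable {E : Type*} [MeasurableSpace E] (μ : Measure E) [IsFiniteMeasure μ]

section OnePoint

variable {w : BoundedMeasurable (Multiset E)} {a : E} {c : ℝ} {ε : E → ℝ}

theorem addPointOp_pow_apply_cons (hεm : Measurable ε) (hε : Integrable ε μ)
    (hw : ∀ s, w (a ::ₘ s) = c * (s.map ε).prod * w s) (k : ℕ) (s : Multiset E) :
    (addPointOp μ ^ k) w (a ::ₘ s) = c * (s.map ε).prod * (annihilationOp μ hεm hε ^ k) w s := by
  induction k generalizing s with
  | zero => exact hw s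
  | succ k ih =>
    simp only [pow_succ', mul_apply_eq_comp, addPointOp_apply, annihilationOp_apply,
      ← integral_const_mul]
    congr 1 with y
    rw [Multiset.cons_swap, ih, Multiset.map_cons, Multiset.prod_cons]
    ring

theorem exp_addPointOp_apply_cons (hεm : Measurable ε) (hε : Integrable ε μ)
    (hw : ∀ s, w (a ::ₘ s) = c * (s.map ε).prod * w s) (t : ℝ) (s : Multiset E) :
    NormedSpace.exp (t • addPointOp μ) w (a ::ₘ s) =
      c * (s.map ε).prod * NormedSpace.exp (t • annihilationOp μ hεm hε) w s := by
  have hleft := (BoundedMeasurable.evalCLM (a ::ₘ s)).hasSum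
    (hasSum_exp_smul_apply (addPointOp μ) t w)
  have hright := ((BoundedMeasurable.evalCLM s).hasSum
    (hasSum_exp_smul_apply (annihilationOp μ hεm hε) t w)).mul_left (c * (s.map ε).prod)
  refine hleft.unique (hright.congr_fun fun k ↦ ?_)
  simp only [map_smul, BoundedMeasurable.evalCLM_apply, smul_eq_mul,
    addPointOp_pow_apply_cons μ hεm hε hw]
  ring

/-- The Kirkwood–Salsburg equation. -/
theorem exp_addPointOp_apply_cons_eq_exp_sub (hεm : Measurable ε) (hε : Integrable ε μ)
    (hw : ∀ s, w (a ::ₘ s) = c * (s.map ε).prod * w s) (t : ℝ) (s : Multiset E) :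
    NormedSpace.exp (t • addPointOp μ) w (a ::ₘ s) = c * (s.map ε).prod *
      NormedSpace.exp (t • (annihilationOp μ hεm hε - addPointOp μ))
        (NormedSpace.exp (t • addPointOp μ) w) s := by
  have hcomm : Commute (t • annihilationOp μ hεm hε) (t • addPointOp μ) :=
    ((commute_annihilationOp μ hεm hε _ _).smul_left t).smul_right t
  rw [exp_addPointOp_apply_cons μ hεm hε hw, smul_sub, exp_sub_apply_exp_apply hcomm]

theorem abs_exp_addPointOp_apply_cons_le (hεm : Measurable ε) (hε : Integrable ε μ)
    (hw : ∀ s, w (a ::ₘ s) = c * (s.map ε).prod * w s) (t : ℝ) (s : Multiset E) :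
    |NormedSpace.exp (t • addPointOp μ) w (a ::ₘ s)| ≤ |c| * |(s.map ε).prod| *
      Real.exp (|t| * ∫ y, |ε y - 1| ∂μ) * ‖NormedSpace.exp (t • addPointOp μ) w‖ := by
  set G := NormedSpace.exp (t • addPointOp μ) w
  set D := annihilationOp μ hεm hε - addPointOp μ
  have hD : ‖t • D‖ ≤ |t| * ∫ y, |ε y - 1| ∂μ := by
    rw [norm_smul, Real.norm_eq_abs]
    gcongr
    exact norm_annihilationOp_sub_le μ hεm hε _ _
  have hexp : |NormedSpace.exp (t • D) G s| ≤ Real.exp (|t| * ∫ y, |ε y - 1| ∂μ) * ‖G‖ :=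
    calc |NormedSpace.exp (t • D) G s| ≤ ‖NormedSpace.exp (t • D) G‖ :=
          BoundedMeasurable.abs_apply_le_norm _ _
      _ ≤ ‖NormedSpace.exp (t • D)‖ * ‖G‖ := ContinuousLinearMap.le_opNorm _ _
      _ ≤ Real.exp (|t| * ∫ y, |ε y - 1| ∂μ) * ‖G‖ := by
        gcongr
        exact (norm_exp_le_exp_norm ContinuousLinearMap.norm_id_le _).trans
          (Real.exp_le_exp.2 hD)
  rw [exp_addPointOp_apply_cons_eq_exp_sub μ hεm hε hw, abs_mul, abs_mul, mul_assoc (|c| * _)]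
  gcongr

end OnePoint

theorem exp_addPointOp_apply_zero_ne_zero {w : BoundedMeasurable (Multiset E)} (hw0 : w ≠ 0)
    {e : E → E → ℝ} {c C K t : ℝ} (hmeas : ∀ a, Measurable (e a)) (hint : ∀ a, Integrable (e a) μ)
    (hC : ∀ a, ∫ y, |e a y - 1| ∂μ ≤ C) (hK0 : 0 ≤ K)
    (hw : ∀ a s, w (a ::ₘ s) = c * (s.map (e a)).prod * w s)
    (hK : ∀ s : Multiset E, s ≠ 0 → ∃ a s', s = a ::ₘ s' ∧ |(s'.map (e a)).prod| ≤ K)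
    (hcontr : |c| * K * Real.exp (|t| * C) < 1) :
    NormedSpace.exp (t • addPointOp μ) w 0 ≠ 0 := by
  intro hG0
  set G := NormedSpace.exp (t • addPointOp μ) w
  have hGpos : 0 < ‖G‖ :=
    norm_pos_iff.2 fun h ↦ hw0 (exp_apply_injective _ (h.trans (map_zero _).symm))
  have hbound (s : Multiset E) : |G s| ≤ |c| * K * Real.exp (|t| * C) * ‖G‖ := by
    by_cases hs : s = 0
    · rw [hs, hG0, abs_zero]
      positivity
    obtain ⟨a, s', rfl, hprod⟩ := hK s hs
    refine (abs_exp_addPointOp_apply_cons_le μ (hmeas a) (hint a) (hw a) t s').trans ?_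
    gcongr
    exact hC a
  have hcontr_norm : |c| * K * Real.exp (|t| * C) * ‖G‖ < ‖G‖ := mul_lt_of_lt_one_left hGpos hcontr
  exact (BoundedMeasurable.norm_le (by positivity) hbound).not_gt hcontr_norm

end KirkwoodSalsburg

section PartitionFunction

variable {E : Type*} [MeasurableSpace E] (μ : Measure E) {e : E → E → ℝ} {b C : ℝ}

variable (e) in
/-- The grand canonical partition function at activity `z` of the particles with pair weight `e`
and reference measure `μ`. -/
def partitionFunction (z : ℝ) : ℝ :=
  ∑' k : ℕ, z ^ k / k.factorial * ∫ y : Fin k → E, pairProd e y ∂(Measure.pi fun _ ↦ μ)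

theorem partitionFunction_zero : partitionFunction μ e 0 = 1 := by
  rw [partitionFunction, tsum_eq_single 0 (fun k hk ↦ by simp [hk])]
  simp [pairProd, Measure.real]

variable (e b) in
/-- A measurable nonnegative symmetric pair weight whose products over `n`-point configurations are
at most `b ^ n`; a potential that is stable with constant `B` gives such a weight with
`b = e^{βB}`. -/
structure IsStablePairWeight : Prop where
  symm : ∀ x y, e x y = e y x
  nonneg : ∀ x y, 0 ≤ e x y
  measurable : Measurable (Function.uncurry e)
  pairProd_le : ∀ (n : ℕ) (x : Fin n → E), pairProd e x ≤ b ^ n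

theorem exists_boundedMeasurable_eq_pow_card_mul_pairWeight (he : IsStablePairWeight e b)
    {c : ℝ} (hc : 0 ≤ c) (hcb0 : 0 ≤ c * b) (hcb1 : c * b ≤ 1) :
    ∃ w : BoundedMeasurable (Multiset E), ∀ s, w s = c ^ s.card * pairWeight e he.symm s := by
  refine ⟨.ofBound (fun s ↦ c ^ s.card * pairWeight e he.symm s)
    (measurable_multiset_iff.2 fun n ↦ ?_) 1 fun s ↦ ?_, fun s ↦ rfl⟩
  · simpa only [card_config, pairWeight_config] using
      (measurable_pairProd he.measurable n).const_mul _
  · obtain ⟨n, x, rfl⟩ := exists_config_eq s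
    rw [card_config, pairWeight_config,
      abs_of_nonneg (mul_nonneg (pow_nonneg hc n) (pairProd_nonneg he.nonneg x))]
    calc c ^ n * pairProd e x ≤ c ^ n * b ^ n := by
          gcongr
          exact he.pairProd_le n x
      _ = (c * b) ^ n := (mul_pow c b n).symm
      _ ≤ 1 := pow_le_one₀ hcb0 hcb1

variable [IsFiniteMeasure μ]

theorem partitionFunction_mul_eq_exp_addPointOp_apply_zero {hsymm : ∀ a b, e a b = e b a}
    {w : BoundedMeasurable (Multiset E)} {c : ℝ}
    (hw : ∀ s, w s = c ^ s.card * pairWeight e hsymm s) (t : ℝ) :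
    partitionFunction μ e (t * c) = NormedSpace.exp (t • addPointOp μ) w 0 := by
  rw [exp_smul_addPointOp_apply_zero, partitionFunction]
  refine tsum_congr fun k ↦ ?_
  simp only [hw, card_config, pairWeight_config, integral_const_mul]
  ring

theorem IsStablePairWeight.integrable (he : IsStablePairWeight e b) (a : E) :
    Integrable (e a) μ :=
  .of_bound he.measurable.of_uncurry_left.aestronglyMeasurable (b ^ 2) (.of_forall fun y ↦ by
    rw [Real.norm_of_nonneg (he.nonneg a y)]
    exact apply_le_sq_of_pairProd_le he.pairProd_le a y)

theorem continuous_partitionFunction (he : IsStablePairWeight e b) (hb : 0 < b) :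
    Continuous (partitionFunction μ e) := by
  have hcb : b⁻¹ * b = 1 := inv_mul_cancel₀ hb.ne'
  obtain ⟨w, hw⟩ := exists_boundedMeasurable_eq_pow_card_mul_pairWeight he
    (inv_nonneg.2 hb.le) (hcb ▸ zero_le_one) hcb.le
  have heq (z : ℝ) : partitionFunction μ e z = NormedSpace.exp ((z * b) • addPointOp μ) w 0 := by
    rw [← partitionFunction_mul_eq_exp_addPointOp_apply_zero μ hw, mul_inv_cancel_right₀ hb.ne']
  rw [funext heq]
  exact (BoundedMeasurable.evalCLM 0).continuous.comp
    ((continuous_exp_smul_apply (addPointOp μ) w).comp (continuous_mul_const b))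

theorem partitionFunction_ne_zero (he : IsStablePairWeight e b) (hb : 1 ≤ b)
    (hC : ∀ a, ∫ y, |e a y - 1| ∂μ ≤ C) {z : ℝ} (hz : |z| * (Real.exp 1 * b ^ 2 * C) < 1) :
    partitionFunction μ e z ≠ 0 := by
  have hb0 : 0 < b := one_pos.trans_le hb
  -- This `r` maximises the radius `log (r / b ^ 2) / (r * C)` of contractivity.
  set r : ℝ := Real.exp 1 * b ^ 2 with hr
  have hr0 : 0 < r := by positivity
  have hbr : b ≤ r := calc
    b ≤ b ^ 2 := le_self_pow₀ hb two_ne_zero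
    _ ≤ r := le_mul_of_one_le_left (by positivity) (Real.one_le_exp zero_le_one)
  obtain ⟨w, hw⟩ := exists_boundedMeasurable_eq_pow_card_mul_pairWeight he
    (inv_nonneg.2 hr0.le) (by positivity) (inv_mul_le_one_of_le₀ hbr hr0.le)
  have hw0 : w ≠ 0 := fun h ↦ by simpa [h, pairWeight_zero] using hw 0
  have hw_cons (a s) : w (a ::ₘ s) = r⁻¹ * (s.map (e a)).prod * w s := by
    rw [hw, hw, Multiset.card_cons, pairWeight_cons]
    ring
  have hcontr : |r⁻¹| * b ^ 2 * Real.exp (|z * r| * C) < 1 := by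
    have hinv : |r⁻¹| * b ^ 2 = Real.exp (-1) := by
      rw [abs_of_pos (inv_pos.2 hr0), hr, Real.exp_neg]
      field_simp
    rw [hinv, ← Real.exp_add, Real.exp_lt_one_iff, abs_mul, abs_of_pos hr0]
    linarith
  rw [← mul_inv_cancel_right₀ hr0.ne' z, partitionFunction_mul_eq_exp_addPointOp_apply_zero μ hw]
  exact exp_addPointOp_apply_zero_ne_zero μ hw0 (fun _ ↦ he.measurable.of_uncurry_left)
    (he.integrable μ) hC (sq_nonneg b) hw_cons
    (fun _ ↦ exists_eq_cons_prod_map_le_sq he.symm he.nonneg hb0 he.pairProd_le) hcontr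

theorem partitionFunction_pos (he : IsStablePairWeight e b) (hb : 1 ≤ b)
    (hC : ∀ a, ∫ y, |e a y - 1| ∂μ ≤ C) {z : ℝ} (hz : |z| * (Real.exp 1 * b ^ 2 * C) < 1) :
    0 < partitionFunction μ e z := by
  by_contra! hnonpos
  have hcont := continuous_partitionFunction μ he (one_pos.trans_le hb)
  have hmem : 0 ∈ Set.uIcc (partitionFunction μ e 0) (partitionFunction μ e z) := by
    rw [partitionFunction_zero]
    exact Set.mem_uIcc_of_ge hnonpos zero_le_one
  obtain ⟨t, ht, hroot⟩ := intermediate_value_uIcc hcont.continuousOn hmem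
  refine partitionFunction_ne_zero μ he hb hC ?_ hroot
  have htz : |t| ≤ |z| := by simpa using Set.abs_sub_left_of_mem_uIcc ht
  rcases le_total 0 (Real.exp 1 * b ^ 2 * C) with hpos | hneg
  · exact (mul_le_mul_of_nonneg_right htz hpos).trans_lt hz
  · exact (mul_nonpos_of_nonneg_of_nonpos (abs_nonneg t) hneg).trans_lt one_pos

end PartitionFunction

section Boltzmann

theorem boltz_nonneg (β : ℝ) (t : EReal) : 0 ≤ boltz β t := by
  unfold boltz
  split_ifs <;> positivity

theorem boltz_add (β : ℝ) {s t : EReal} (hs : s ≠ ⊥) (ht : t ≠ ⊥) :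
    boltz β (s + t) = boltz β s * boltz β t := by
  by_cases hs' : s = ⊤
  · simp [boltz, hs', EReal.top_add_of_ne_bot ht]
  by_cases ht' : t = ⊤
  · simp [boltz, ht', EReal.add_top_of_ne_bot hs]
  simp only [boltz, hs', ht', (EReal.add_lt_top hs' ht').ne, if_false,
    EReal.toReal_add hs' hs ht' ht, mul_add, Real.exp_add]

theorem ereal_sum_ne_bot {ι : Type*} (S : Finset ι) {f : ι → EReal} (hf : ∀ i, f i ≠ ⊥) :
    ∑ i ∈ S, f i ≠ ⊥ :=
  Finset.sum_induction f (· ≠ ⊥) (fun _ _ hs ht ↦ by simp [EReal.add_eq_bot_iff, hs, ht])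
    EReal.zero_ne_bot fun i _ ↦ hf i

theorem boltz_sum {ι : Type*} (β : ℝ) (S : Finset ι) {f : ι → EReal} (hf : ∀ i, f i ≠ ⊥) :
    boltz β (∑ i ∈ S, f i) = ∏ i ∈ S, boltz β (f i) := by
  classical
  induction S using Finset.induction_on with
  | empty => simp [boltz]
  | insert i S hi ih =>
    rw [Finset.sum_insert hi, Finset.prod_insert hi, boltz_add β (hf i) (ereal_sum_ne_bot S hf), ih]

theorem boltz_le_exp {β : ℝ} (hβ : 0 ≤ β) {m : ℝ} {t : EReal} (h : (m : EReal) ≤ t) :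
    boltz β t ≤ Real.exp (-β * m) := by
  unfold boltz
  split_ifs with ht
  · positivity
  · have hm : m ≤ t.toReal := by
      simpa using EReal.toReal_le_toReal h (EReal.coe_ne_bot m) ht
    exact Real.exp_le_exp.2 (mul_le_mul_of_nonpos_left hm (neg_nonpos.2 hβ))

theorem measurable_boltz (β : ℝ) : Measurable (boltz β) :=
  Measurable.ite (measurableSet_singleton _) measurable_const
    (Real.measurable_exp.comp (measurable_ereal_toReal.const_mul _))

variable {d : ℕ} {β B : ℝ} {u : (Fin d → ℝ) → EReal}

variable (β u) in
/-- The pair weight `e^{-βu(a-b)}`. -/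
def boltzWeight (a b : Fin d → ℝ) : ℝ := boltz β (u (a - b))

theorem boltzWeight_comm (hu : ∀ x, u (-x) = u x) (a b : Fin d → ℝ) :
    boltzWeight β u a b = boltzWeight β u b a := by
  rw [boltzWeight, ← hu, neg_sub, boltzWeight]

theorem measurable_uncurry_boltzWeight (hu : Measurable u) :
    Measurable (Function.uncurry (boltzWeight β u)) :=
  (measurable_boltz β).comp (hu.comp (measurable_fst.sub measurable_snd))

theorem IsPairPotential.ne_bot (hu : IsPairPotential u) (x : Fin d → ℝ) : u x ≠ ⊥ := by
  obtain ⟨-, -, m, hm⟩ := hu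
  exact ((EReal.bot_lt_coe m).trans_le (hm x)).ne'

theorem boltz_Ham (hu : ∀ x, u x ≠ ⊥) {n : ℕ} (x : Fin n → Fin d → ℝ) :
    boltz β (Ham u n x) = pairProd (boltzWeight β u) x :=
  boltz_sum β _ fun _ ↦ hu _

theorem pairProd_boltzWeight_le (hβ : 0 ≤ β) (hu : ∀ x, u x ≠ ⊥) (hstab : IsStable u B) (n : ℕ)
    (x : Fin n → Fin d → ℝ) : pairProd (boltzWeight β u) x ≤ Real.exp (β * B) ^ n := by
  rw [← boltz_Ham hu, ← Real.exp_nat_mul]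
  convert boltz_le_exp hβ (hstab n x) using 2
  ring

theorem isStablePairWeight_boltzWeight (hβ : 0 ≤ β) (hu : IsPairPotential u)
    (hstab : IsStable u B) : IsStablePairWeight (boltzWeight β u) (Real.exp (β * B)) where
  symm := boltzWeight_comm hu.2.1
  nonneg _ _ := boltz_nonneg _ _
  measurable := measurable_uncurry_boltzWeight hu.1
  pairProd_le := pairProd_boltzWeight_le hβ hu.ne_bot hstab

theorem IsStable.nonneg (hstab : IsStable u B) : 0 ≤ B := by
  have hHam : Ham u 1 0 = 0 := Finset.sum_eq_zero fun p hp ↦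
    absurd (Finset.mem_filter.1 hp).2 (Subsingleton.elim p.1 p.2).not_lt
  simpa [hHam] using hstab 1 0

theorem setIntegral_abs_boltzWeight_sub_one_le (hreg : IsRegularPP β u) (Λ : Set (Fin d → ℝ))
    (a : Fin d → ℝ) : ∫ y in Λ, |boltzWeight β u a y - 1| ≤ Creg β u :=
  calc ∫ y in Λ, |mayer β u (a - y)| ≤ ∫ y, |mayer β u (a - y)| :=
        setIntegral_le_integral (hreg.comp_sub_left a).abs (.of_forall fun _ ↦ abs_nonneg _)
    _ = Creg β u := integral_sub_left_eq_self (fun y ↦ |mayer β u y|) volume a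

theorem tsum_setIntegral_boltz_Ham_eq_partitionFunction (hu : ∀ x, u x ≠ ⊥)
    (Λ : Set (Fin d → ℝ)) (z : ℝ) :
    ∑' k : ℕ, z ^ k / (Nat.factorial k : ℝ) * ∫ y in cube Λ k, boltz β (Ham u k y) =
      partitionFunction (volume.restrict Λ) (boltzWeight β u) z := by
  simp only [cube, volume_pi, Measure.restrict_pi_pi, boltz_Ham hu, partitionFunction]

end Boltzmann

end

theorem statement5_general {d : ℕ} {β B : ℝ} (hβ : 0 ≤ β) {u : (Fin d → ℝ) → EReal}
    (hu : IsPairPotential u) (hstab : IsStable u B) (hreg : IsRegularPP β u)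
    {Λ : Set (Fin d → ℝ)} (hΛ : volume Λ ≠ ∞) {z : ℝ}
    (hz : |z| * (Real.exp (2 * β * B + 1) * Creg β u) < 1) :
    0 < ∑' k : ℕ, z ^ k / (Nat.factorial k : ℝ) * ∫ y in cube Λ k, boltz β (Ham u k y) := by
  have hfinite : IsFiniteMeasure (volume.restrict Λ) := isFiniteMeasure_restrict.2 hΛ
  have hradius : Real.exp (2 * β * B + 1) = Real.exp 1 * Real.exp (β * B) ^ 2 := by
    rw [← Real.exp_nat_mul, ← Real.exp_add]
    congr 1
    push_cast
    ring
  rw [tsum_setIntegral_boltz_Ham_eq_partitionFunction hu.ne_bot]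
  rw [hradius] at hz
  exact partitionFunction_pos _ (isStablePairWeight_boltzWeight hβ hu hstab)
    (Real.one_le_exp (mul_nonneg hβ hstab.nonneg))
    (setIntegral_abs_boltzWeight_sub_one_le hreg Λ) hz

/-- second Lenard-positivity condition: for real `0 < z < z₀`, the
partition function at negative activity is strictly positive,
`Ξ_Λ(-z) = Σ_k ((-z)^k/k!) ∫_{Λ^k} e^{-βH(y)} dy > 0`. -/
theorem statement5 {d : ℕ} (hd : 1 ≤ d) (β B : ℝ) (hβ : 0 < β) (hB : 0 ≤ B)
    (u : (Fin d → ℝ) → EReal) (hu : IsPairPotential u)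
    (hstab : IsStable u B) (hreg : IsRegularPP β u)
    (Λ : Set (Fin d → ℝ)) (hΛb : IsBounded Λ) (hΛm : MeasurableSet Λ)
    (z : ℝ) (hz0 : 0 < z) (hz : z * (Real.exp (2 * β * B + 1) * Creg β u) < 1) :
    0 < ∑' k : ℕ, (-z) ^ k / (Nat.factorial k : ℝ) *
      ∫ y in cube Λ k, boltz β (Ham u k y) := by
  exact statement5_general hβ.le hu hstab hreg hΛb.measure_lt_top.ne
    (by rwa [abs_neg, abs_of_pos hz0])
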